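/- In the constructed 2-RAR instance, the eligibility sets satisfy: for each j∈[n] and ℓ∈[2], the set of eligible machines of TJob(j,ℓ) is exactly {TMach(j,ℓ)}, and the set of eligible machines of TJob(j,2) is exactly {TMach(j,0), TMach(j,1)}. -/

import Mathlib

/-! A `TJob` of variable `j` has second demand at least `6n - (2j+1) ≥ 4n + 1`, whereas the second
capacity `4j' + t` of a `CMach` is at most `4n - 1`; so no `CMach` is eligible
(`not_qElig_cMach`). On the machines `TMach(j,q)` the two capacities are `v` and `6n - v` for
`v = 2j + q`, so a demand pair `(a, 6n - b)` with `a, b < 2n` picks out exactly the machines with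
`a ≤ v ≤ b`. For `TJob(j,0)` and `TJob(j,1)` we have `a = b`, leaving one machine; for `TJob(j,2)`
we have `a = 2j`, `b = 2j + 1`, leaving two. Since `q < 2`, the number `v` determines `(j,q)`. -/

open Finset

/-- A 3-SAT* instance: `n` variables, `2m` clauses of 3 literals each
(the first `m` are 1-in-3-clauses, the last `m` are 2-in-3-clauses).
`lit i s` is the literal at position `s` of clause `i`, given as a pair
(variable, polarity). The occurrence bijection `occ` maps the pair `(j,t)`
(the `t`-th occurrence of variable `x_j`, positive for `t = 0,1`, negative for
`t = 2,3`) to the corresponding (clause, position) pair; `occ_spec` says the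
literal there is indeed `x_j` with the right polarity. Bijectivity of `occ`
encodes that every literal occurs exactly twice (and forces `6m = 4n`). -/
structure SAT3Star where
  n : ℕ
  m : ℕ
  lit : Fin (2 * m) → Fin 3 → Fin n × Bool
  occ : (Fin n × Fin 4) ≃ (Fin (2 * m) × Fin 3)
  occ_spec : ∀ jt : Fin n × Fin 4,
    lit (occ jt).1 (occ jt).2 = (jt.1, decide ((jt.2 : ℕ) < 2))

/-- `α` satisfies the 3-SAT* instance: every `k`-in-3-clause has exactly `k`
true literals. -/
def SAT3Star.Satisfies (S : SAT3Star) (α : Fin S.n → Bool) : Prop :=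
  ∀ i : Fin (2 * S.m),
    (Finset.univ.filter (fun s : Fin 3 => α (S.lit i s).1 = (S.lit i s).2)).card =
      if (i : ℕ) < S.m then 1 else 2

/-- `⌊t/2⌋` as an element of `Fin 2`. -/
def half (t : Fin 4) : Fin 2 := ⟨(t : ℕ) / 2, by have := t.isLt; omega⟩

/-- Machines of the 2-RAR instance: `TMach(j,q)` (left) and `CMach(i,s)` (right). -/
abbrev QMach (S : SAT3Star) := (Fin S.n × Fin 2) ⊕ (Fin (2 * S.m) × Fin 3)

/-- Jobs: `TJob(j,ℓ)` (left), `CJob(i,s)` (middle), `VJob(j,t,∘)` (right). -/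
abbrev QJob (S : SAT3Star) := (Fin S.n × Fin 3) ⊕ (Fin (2 * S.m) × Fin 3) ⊕ (Fin S.n × Fin 4 × Bool)

/-- Job sizes: `TJob(j,ℓ)` has size 1 for `ℓ∈[2]` and 2 for `ℓ=2`; `CJob(i,s)` has size
`4 + φ(i,s)`; `VJob(j,t,⊤)` has size 3 and `VJob(j,t,⊥)` has size 2. -/
def qSize (S : SAT3Star) : QJob S → ℕ
  | .inl (_, l) => if (l : ℕ) = 2 then 2 else 1
  | .inr (.inl (i, s)) =>
      4 + (if (s : ℕ) = 0 then 0
           else if (s : ℕ) = 2 then 1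
           else if (i : ℕ) < S.m then 0 else 1)
  | .inr (.inr (_, _, b)) => if b then 3 else 2

/-- Resource capacities of the machines (two resources). -/
def qCap (S : SAT3Star) : QMach S → ℕ × ℕ
  | .inl (j, q) => (2 * (j : ℕ) + (q : ℕ), 6 * S.n - (2 * (j : ℕ) + (q : ℕ)))
  | .inr c => (2 * S.n + (c.1 : ℕ), 4 * ((S.occ.symm c).1 : ℕ) + ((S.occ.symm c).2 : ℕ))

/-- Resource demands of the jobs (two resources). -/
def qDem (S : SAT3Star) : QJob S → ℕ × ℕ
  | .inl (j, l) =>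
      if (l : ℕ) = 0 then (2 * (j : ℕ), 6 * S.n - 2 * (j : ℕ))
      else if (l : ℕ) = 1 then (2 * (j : ℕ) + 1, 6 * S.n - (2 * (j : ℕ) + 1))
      else (2 * (j : ℕ), 6 * S.n - (2 * (j : ℕ) + 1))
  | .inr (.inl (i, _)) => (2 * S.n + (i : ℕ), 0)
  | .inr (.inr (j, t, _)) => (2 * (j : ℕ) + (t : ℕ) / 2, 4 * (j : ℕ) + (t : ℕ))

/-- Eligibility: both resource demands are met by the capacities. -/
def qElig (S : SAT3Star) (job : QJob S) (M : QMach S) : Prop :=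
  (qDem S job).1 ≤ (qCap S M).1 ∧ (qDem S job).2 ≤ (qCap S M).2

/-- Load of a machine under a schedule. -/
def qLoad (S : SAT3Star) (σ : QJob S → QMach S) (M : QMach S) : ℕ :=
  ∑ j ∈ Finset.univ.filter (fun j => σ j = M), qSize S j

/-- A 7-schedule: every job on an eligible machine, every machine with load exactly 7. -/
def SevenSchedule (S : SAT3Star) (σ : QJob S → QMach S) : Prop :=
  (∀ j, qElig S j (σ j)) ∧ ∀ M, qLoad S σ M = 7

/-- The second resource excludes every clause machine for every `TJob`. -/
theorem not_qElig_cMach (S : SAT3Star) (j : Fin S.n) (l : Fin 3)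
    (c : Fin (2 * S.m) × Fin 3) : ¬ qElig S (.inl (j, l)) (.inr c) := by
  rintro ⟨-, h⟩
  have hj := j.isLt
  have h1 := (S.occ.symm c).1.isLt
  have h2 := (S.occ.symm c).2.isLt
  simp only [qDem, qCap] at h
  split_ifs at h <;> dsimp only at h <;> omega

/-- in the 2-RAR instance, `M(TJob(j,ℓ)) = {TMach(j,ℓ)}` for `ℓ ∈ [2]`,
and `M(TJob(j,2)) = {TMach(j,0), TMach(j,1)}`. -/
theorem statement9 (S : SAT3Star) :
    (∀ (j : Fin S.n) (l : Fin 2) (M : QMach S),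
        qElig S (.inl (j, l.castSucc)) M ↔ M = .inl (j, l)) ∧
    (∀ (j : Fin S.n) (M : QMach S),
        qElig S (.inl (j, 2)) M ↔ (M = .inl (j, 0) ∨ M = .inl (j, 1))) := by
  refine ⟨fun j l M => ?_, fun j M => ?_⟩
  · rcases M with ⟨j', q⟩ | c
    · have hj := j.isLt
      have hj' := j'.isLt
      have hq := q.isLt
      rw [Sum.inl.injEq, Prod.mk.injEq, Fin.ext_iff, Fin.ext_iff]
      fin_cases l <;> simp [qElig, qDem, qCap] <;> omega
    · simp [not_qElig_cMach]
  · rcases M with ⟨j', q⟩ | c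
    · have hj := j.isLt
      have hj' := j'.isLt
      have hq := q.isLt
      rw [Sum.inl.injEq, Sum.inl.injEq, Prod.mk.injEq, Prod.mk.injEq, Fin.ext_iff, Fin.ext_iff,
        Fin.ext_iff]
      simp [qElig, qDem, qCap]
      omega
    · simp [not_qElig_cMach]
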